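/- arXiv:2307.09581 — 2 statements merged into one kernel-verified Lean document; each statement's English description precedes it below -/
import Mathlib

section
/- For every n ≥ 0, the truncated Laguerre polynomials satisfy the lowering relation (x² − z·x)·P_{n+1}′(x) = δ_n(x)·P_{n+1}(x) + C_n(x)·P_n(x), where δ_n(x) = (n+1)·(x − z) + Σ_{k=0}^n b_k − a_{n+1} and C_n(x) = a_{n+1}·(x + b_{n+1} − (2n + α + z + 3)). -/
open MeasureTheory intervalIntegral Polynomial


lemma tl_integrable (α z : ℝ) (hα : -1 < α) (p : ℝ[X]) :
    IntervalIntegrable (fun x : ℝ => p.eval x * x ^ α * Real.exp (-x)) volume 0 z := by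
  have h1 : IntervalIntegrable (fun x : ℝ => x ^ α) volume 0 z :=
    intervalIntegral.intervalIntegrable_rpow' hα
  have h2 := (h1.continuousOn_mul (g := fun x => p.eval x) (by fun_prop)).mul_continuousOn
    (g := fun x => Real.exp (-x)) (by fun_prop)
  exact h2

noncomputable def tlL (α z : ℝ) (hα : -1 < α) : ℝ[X] →ₗ[ℝ] ℝ where
  toFun p := ∫ x in (0:ℝ)..z, p.eval x * x ^ α * Real.exp (-x)
  map_add' p q := by
    rw [← intervalIntegral.integral_add (tl_integrable α z hα p) (tl_integrable α z hα q)]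
    congr 1
    ext x
    simp only [eval_add]
    ring
  map_smul' c p := by
    rw [RingHom.id_apply, smul_eq_mul, ← intervalIntegral.integral_const_mul]
    congr 1
    ext x
    simp only [eval_smul, smul_eq_mul]
    ring

lemma tl_ibp (α z : ℝ) (hα : -1 < α) (hz : 0 < z) (q : ℝ[X]) :
    tlL α z hα ((X ^ 2 - C z * X) * derivative q
      + (X * (C (2 + α + z) - X) - C ((1 + α) * z)) * q) = 0 := by
  have key := intervalIntegral.integral_eq_sub_of_hasDerivAt_of_le (a := 0) (b := z) hz.le
    (f := fun x : ℝ => (x - z) * q.eval x * x ^ (α + 1) * Real.exp (-x))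
    (f' := fun x : ℝ => ((X ^ 2 - C z * X) * derivative q
      + (X * (C (2 + α + z) - X) - C ((1 + α) * z)) * q).eval x * x ^ α * Real.exp (-x))
    ?_ ?_ (tl_integrable α z hα _)
  · change (∫ x in (0:ℝ)..z, _) = 0
    rw [key]
    simp [Real.zero_rpow (show α + 1 ≠ 0 by linarith)]
  · have : Continuous (fun x : ℝ => x ^ (α + 1)) := Real.continuous_rpow_const (by linarith)
    apply Continuous.continuousOn
    fun_prop
  · intro x hx
    have hx0 : 0 < x := hx.1
    have h1 : HasDerivAt (fun x : ℝ => x ^ (α + 1)) ((α + 1) * x ^ α) x := by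
      have := Real.hasDerivAt_rpow_const (x := x) (p := α + 1) (Or.inl hx0.ne')
      simpa using this
    have h2 : HasDerivAt (fun x : ℝ => Real.exp (-x)) (Real.exp (-x) * (-1)) x :=
      (hasDerivAt_neg x).exp
    have h3 := ((((hasDerivAt_id x).sub_const z).mul (q.hasDerivAt x)).mul h1).mul h2
    refine h3.congr_deriv ?_
    have : x ^ (α + 1) = x ^ α * x := by
      rw [Real.rpow_add hx0, Real.rpow_one]
    simp only [Pi.mul_apply, this, id, eval_add, eval_mul, eval_sub, eval_pow, eval_X, eval_C]
    ring

lemma tl_definite (α z : ℝ) (hα : -1 < α) (hz : 0 < z) (p : ℝ[X])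
    (h : tlL α z hα (p * p) = 0) : p = 0 := by
  by_contra hp
  have h' : (∫ x in (0:ℝ)..z, (p * p).eval x * x ^ α * Real.exp (-x)) = 0 := h
  rw [intervalIntegral.integral_eq_zero_iff_of_le_of_nonneg_ae hz.le ?_
    (tl_integrable α z hα _)] at h'
  · have h0 : ∀ᵐ x ∂(volume.restrict (Set.Ioc 0 z)), x ∈ Set.Ioc (0:ℝ) z :=
      ae_restrict_mem measurableSet_Ioc
    have hr : ∀ᵐ x ∂(volume.restrict (Set.Ioc 0 z)), x ∉ (p.roots.toFinset : Set ℝ) := by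
      apply ae_restrict_of_ae
      exact (Set.Countable.ae_notMem (Finset.countable_toSet _) _)
    have hF : ∀ᵐ x ∂(volume.restrict (Set.Ioc 0 z)), False := by
      filter_upwards [h', h0, hr] with x h1 h2 h3
      have hx0 : 0 < x := h2.1
      have e1 := (Real.rpow_pos_of_pos hx0 α).ne'
      have e2 := (Real.exp_pos (-x)).ne'
      have : p.eval x = 0 := by
        simpa [e1, e2] using h1
      apply h3
      simp [hp, this]
    rw [Filter.eventually_false_iff_eq_bot, ae_eq_bot, Measure.restrict_eq_zero,
      Real.volume_Ioc] at hF
    simp at hF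
    linarith
  · filter_upwards [ae_restrict_mem measurableSet_Ioc] with x hx
    have hx0 : 0 < x := hx.1
    have e1 := (Real.rpow_pos_of_pos hx0 α).le
    have e2 := (Real.exp_pos (-x)).le
    simp only [Pi.zero_apply, eval_mul]
    have := mul_self_nonneg (p.eval x)
    positivity

section alg
variable (L : ℝ[X] →ₗ[ℝ] ℝ) (P : ℕ → ℝ[X])

lemma tl_C (c : ℝ) (p : ℝ[X]) : L (C c * p) = c * L p := by
  rw [← smul_eq_C_mul, map_smul, smul_eq_mul]

lemma tl_span (hm : ∀ n, (P n).Monic) (hd : ∀ n, (P n).natDegree = n) (D : ℝ[X]) (k : ℕ)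
    (h : ∀ m, m < k → L (D * P m) = 0) :
    ∀ q : ℝ[X], q.degree < k → L (D * q) = 0 := by
  induction k with
  | zero =>
    intro q hq
    have : q = 0 := by
      rw [← degree_eq_bot]
      exact Nat.WithBot.lt_zero_iff.mp (by simpa using hq)
    simp [this]
  | succ k ih =>
    intro q hq
    have h1 := ih (fun m hmk => h m (by omega)) (q - C (q.coeff k) * P k) (by
      rw [degree_lt_iff_coeff_zero] at hq ⊢
      intro j hj
      rw [coeff_sub, coeff_C_mul]
      rcases hj.eq_or_lt with rfl | hj
      · have := hm k
        rw [Monic, leadingCoeff, hd] at this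
        rw [this]; ring
      · rw [hq j hj, coeff_eq_zero_of_natDegree_lt (by rw [hd]; exact hj : (P k).natDegree < j)]
        ring)
    have h2 : D * q = D * (q - C (q.coeff k) * P k) + C (q.coeff k) * (D * P k) := by ring
    rw [h2, map_add, h1, tl_C, h k (by omega)]
    ring

lemma tl_top (hm : ∀ n, (P n).Monic) (hd : ∀ n, (P n).natDegree = n)
    (ho : ∀ m n, m ≠ n → L (P m * P n) = 0) (k : ℕ) (q : ℝ[X]) (hq : q.natDegree ≤ k) :
    L (P k * q) = q.coeff k * L (P k * P k) := by
  have h1 := tl_span L P hm hd (P k) k (fun m hmk => ho k m (by omega))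
    (q - C (q.coeff k) * P k) (by
      rw [degree_lt_iff_coeff_zero]
      intro j hj
      rw [coeff_sub, coeff_C_mul]
      rcases hj.eq_or_lt with rfl | hj
      · have := hm k
        rw [Monic, leadingCoeff, hd] at this
        rw [this]; ring
      · rw [coeff_eq_zero_of_natDegree_lt (by omega : q.natDegree < j),
          coeff_eq_zero_of_natDegree_lt (by rw [hd]; exact hj : (P k).natDegree < j)]
        ring)
  have h2 : P k * q = P k * (q - C (q.coeff k) * P k) + C (q.coeff k) * (P k * P k) := by ring
  rw [h2, map_add, h1, tl_C]
  ring

lemma tl_sub (hm : ∀ n, (P n).Monic) (hd : ∀ n, (P n).natDegree = n) (a b : ℕ → ℝ)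
    (ha0 : a 0 = 0)
    (hrec : ∀ n, X * P n = P (n + 1) + C (b n) * P n + C (a n) * P (n - 1)) (n : ℕ) :
    (P (n + 1)).coeff n = - ∑ k ∈ Finset.range (n + 1), b k := by
  have lead : ∀ k, (P k).coeff k = 1 := fun k => by
    have := hm k
    rwa [Monic, leadingCoeff, hd] at this
  induction n with
  | zero =>
    have := congrArg (fun p => p.coeff 0) (hrec 0)
    simp [ha0, lead] at this
    simp
    linarith
  | succ n ih =>
    have := congrArg (fun p => p.coeff (n + 1)) (hrec (n + 1))
    simp only [coeff_X_mul, coeff_add, coeff_C_mul, lead, ih] at this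
    rw [Nat.add_sub_cancel, coeff_eq_zero_of_natDegree_lt (by rw [hd]; omega : (P n).natDegree < n + 1)] at this
    rw [Finset.sum_range_succ]
    linarith

lemma tl_alg (α z : ℝ) (hm : ∀ n, (P n).Monic) (hd : ∀ n, (P n).natDegree = n)
    (ho : ∀ m n, m ≠ n → L (P m * P n) = 0) (a b : ℕ → ℝ)
    (ha0 : a 0 = 0)
    (hrec : ∀ n, X * P n = P (n + 1) + C (b n) * P n + C (a n) * P (n - 1))
    (ibp : ∀ q, L ((X ^ 2 - C z * X) * derivative q
      + (X * (C (2 + α + z) - X) - C ((1 + α) * z)) * q) = 0)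
    (hdef : ∀ p, L (p * p) = 0 → p = 0) (n : ℕ) :
    (X ^ 2 - C z * X) * derivative (P (n + 1)) =
      C ((n : ℝ) + 1) * P (n + 2)
      + C (((n : ℝ) + 1) * b (n + 1) - ((n : ℝ) + 1) * z + ∑ k ∈ Finset.range (n + 1), b k) * P (n + 1)
      + C (a (n + 1) * (b (n + 1) + b n - (n + 2 + α + z))) * P n
      + C (a (n + 1) * a n) * P (n - 1) := by
  have lead : ∀ k, (P k).coeff k = 1 := fun k => by
    have := hm k
    rwa [Monic, leadingCoeff, hd] at this
  have big : ∀ k j, k < j → (P k).coeff j = 0 := fun k j h =>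
    coeff_eq_zero_of_natDegree_lt (by rw [hd]; exact h)
  have top := tl_top L P hm hd ho
  have hsub := tl_sub P hm hd a b ha0 hrec
  -- a_{n+1} h_n = h_{n+1}
  have ha : a (n + 1) * L (P n * P n) = L (P (n + 1) * P (n + 1)) := by
    have h1 : L ((X * P (n + 1)) * P n) = a (n + 1) * L (P n * P n) := by
      rw [hrec (n + 1), add_mul, add_mul, map_add, map_add, mul_assoc, mul_assoc, tl_C, tl_C,
        Nat.add_sub_cancel, ho _ _ (by omega), ho _ _ (by omega)]
      ring
    have h2 : (X * P (n + 1)) * P n = P (n + 1) * (X * P n) := by ring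
    rw [h2, top _ _ (by
      refine natDegree_mul_le.trans ?_
      rw [hd, natDegree_X]; omega), coeff_X_mul, lead] at h1
    linarith
  rw [← sub_eq_zero]
  set D := (X ^ 2 - C z * X) * derivative (P (n + 1)) - (C ((n : ℝ) + 1) * P (n + 2)
      + C (((n : ℝ) + 1) * b (n + 1) - ((n : ℝ) + 1) * z + ∑ k ∈ Finset.range (n + 1), b k) * P (n + 1)
      + C (a (n + 1) * (b (n + 1) + b n - (n + 2 + α + z))) * P n
      + C (a (n + 1) * a n) * P (n - 1)) with hD
  apply hdef
  apply tl_span L P hm hd D (n + 1)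
  · intro m hmn
    have hmn : m ≤ n := by omega
    set r := (C (2 + α + z) - X) * P m + (X - C z) * derivative (P m) with hr
    have i1 := ibp (P (n + 1) * P m)
    have e1 : (X ^ 2 - C z * X) * derivative (P (n + 1) * P m)
      + (X * (C (2 + α + z) - X) - C ((1 + α) * z)) * (P (n + 1) * P m)
      = (X ^ 2 - C z * X) * derivative (P (n + 1)) * P m + (X * P (n + 1)) * r
        - C ((1 + α) * z) * (P (n + 1) * P m) := by
      rw [derivative_mul, hr]; ring
    have rdeg : r.natDegree ≤ m + 1 := by
      have d1 : (derivative (P m)).natDegree ≤ m := by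
        have := natDegree_derivative_le (P m)
        rw [hd] at this; omega
      have d2 : (C (2 + α + z) - X : ℝ[X]).natDegree ≤ 1 := by
        refine (natDegree_sub_le _ _).trans ?_
        simp
      have d3 : (X - C z : ℝ[X]).natDegree ≤ 1 := by simp
      refine (natDegree_add_le _ _).trans (max_le ?_ ?_)
      · refine natDegree_mul_le.trans ?_
        rw [hd]; omega
      · refine natDegree_mul_le.trans ?_
        omega
    have rlead : r.coeff (m + 1) = -1 := by
      have d1 : (derivative (P m)).coeff m = 0 := by
        rw [coeff_derivative, big m (m + 1) (by omega)]; ring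
      have d2 : (derivative (P m)).coeff (m + 1) = 0 := by
        rw [coeff_derivative, big m _ (by omega)]; ring
      simp only [hr, sub_mul, coeff_add, coeff_sub, coeff_C_mul, coeff_X_mul, d1, d2, lead,
        big m (m + 1) (by omega)]
      ring
    rw [e1, map_sub, map_add, tl_C, ho (n + 1) m (by omega), hrec (n + 1), add_mul, add_mul,
      map_add, map_add, mul_assoc (C _), mul_assoc (C _), tl_C, tl_C, Nat.add_sub_cancel,
      top (n + 1 + 1) r (by omega), top (n + 1) r (by omega),
      coeff_eq_zero_of_natDegree_lt (by omega : r.natDegree < n + 1 + 1)] at i1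
    have e2 : D * P m = (X ^ 2 - C z * X) * derivative (P (n + 1)) * P m
      - (C ((n : ℝ) + 1) * (P (n + 2) * P m)
      + C (((n : ℝ) + 1) * b (n + 1) - ((n : ℝ) + 1) * z + ∑ k ∈ Finset.range (n + 1), b k) * (P (n + 1) * P m)
      + C (a (n + 1) * (b (n + 1) + b n - (n + 2 + α + z))) * (P n * P m)
      + C (a (n + 1) * a n) * (P (n - 1) * P m)) := by rw [hD]; ring
    rw [e2, map_sub, map_add, map_add, map_add, tl_C, tl_C, tl_C, tl_C,
      ho (n + 2) m (by omega), ho (n + 1) m (by omega)]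
    rcases hmn.eq_or_lt with rfl | hlt
    · -- m = n
      have hz1 : a m * L (P (m - 1) * P m) = 0 := by
        rcases Nat.eq_zero_or_pos m with rfl | hpos
        · rw [ha0]; ring
        · rw [ho _ _ (by omega)]; ring
      have e3 : P m * r = C (2 + α + z) * (P m * P m) - (X * P m) * P m
          + P m * ((X - C z) * derivative (P m)) := by rw [hr]; ring
      have d1 : (derivative (P m)).natDegree ≤ m - 1 := by
        have := natDegree_derivative_le (P m)
        rwa [hd] at this
      have e4 : L (P m * ((X - C z) * derivative (P m))) = m * L (P m * P m) := by
        rcases Nat.eq_zero_or_pos m with rfl | hpos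
        · have : derivative (P 0) = 0 := derivative_of_natDegree_zero (hd 0)
          simp [this]
        · obtain ⟨k, rfl⟩ : ∃ k, m = k + 1 := ⟨m - 1, by omega⟩
          rw [top]
          · rw [sub_mul, coeff_sub, coeff_X_mul, coeff_C_mul, coeff_derivative, coeff_derivative,
              lead, big _ (k + 1 + 1) (by omega)]
            push_cast; ring
          · refine natDegree_mul_le.trans ?_
            rw [natDegree_X_sub_C]; omega
      have e5 : L ((X * P m) * P m) = b m * L (P m * P m) := by
        rw [hrec m, add_mul, add_mul, map_add, map_add, mul_assoc, mul_assoc, tl_C, tl_C,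
          ho (m + 1) m (by omega), hz1]
        ring
      rw [rlead, e3, map_add, map_sub, tl_C, e4, e5, ← ha] at i1
      linear_combination i1 - a (m + 1) * hz1
    · rw [ho n m (by omega), coeff_eq_zero_of_natDegree_lt (by omega : r.natDegree < n + 1)] at *
      rw [top n r (by omega)] at i1
      rcases (show m + 1 ≤ n from hlt).eq_or_lt with rfl | hlt2
      · rw [rlead] at i1
        have ha2 : a (m + 1) * L (P m * P m) = L (P (m + 1) * P (m + 1)) := by
          have h1 : L ((X * P (m + 1)) * P m) = a (m + 1) * L (P m * P m) := by
            rw [hrec (m + 1), add_mul, add_mul, map_add, map_add, mul_assoc, mul_assoc, tl_C,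
              tl_C, Nat.add_sub_cancel, ho _ _ (by omega), ho _ _ (by omega)]
            ring
          have h2 : (X * P (m + 1)) * P m = P (m + 1) * (X * P m) := by ring
          rw [h2, top _ _ (by
            refine natDegree_mul_le.trans ?_
            rw [hd, natDegree_X]; omega), coeff_X_mul, lead] at h1
          linarith
        rw [Nat.add_sub_cancel]
        linear_combination i1 - a (m + 1 + 1) * ha2
      · rw [coeff_eq_zero_of_natDegree_lt (by omega : r.natDegree < n)] at i1
        rw [ho (n - 1) m (by omega)]
        linear_combination i1
  · rw [degree_lt_iff_coeff_zero]
    intro j hj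
    obtain ⟨i, rfl⟩ : ∃ i, j = i + 1 := ⟨j - 1, by omega⟩
    have hc : ((X ^ 2 - C z * X) * derivative (P (n + 1))).coeff (i + 1)
        = (P (n + 1)).coeff i * i - z * ((P (n + 1)).coeff (i + 1) * (i + 1)) := by
      rw [show (X ^ 2 - C z * X) * derivative (P (n + 1))
        = X * (X * derivative (P (n + 1))) - C z * (X * derivative (P (n + 1))) by ring,
        coeff_sub, coeff_C_mul, coeff_X_mul, coeff_X_mul, coeff_derivative]
      cases i with
      | zero => simp
      | succ i => rw [coeff_X_mul, coeff_derivative]; push_cast; ring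
    rw [hD, coeff_sub, hc]
    simp only [coeff_add, coeff_C_mul]
    rw [big n (i + 1) (by omega), big (n - 1) (i + 1) (by omega)]
    rcases (show n ≤ i by omega).eq_or_lt with rfl | h1
    · have s1 := hsub n
      have s2 := hsub (n + 1)
      rw [Finset.sum_range_succ] at s2
      rw [s1, show n + 2 = n + 1 + 1 from rfl, s2, lead]
      ring
    · rcases (show n + 1 ≤ i from h1).eq_or_lt with rfl | h2
      · rw [lead, show n + 2 = n + 1 + 1 from rfl, lead, big (n + 1) (n + 1 + 1) (by omega)]
        push_cast; ring
      · rw [big (n + 1) i (by omega), big (n + 1) (i + 1) (by omega),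
          big (n + 2) (i + 1) (by omega)]
        ring
end alg

/-- Lowering relation for the truncated Laguerre polynomials. -/
theorem truncated_laguerre_lowering (α z : ℝ) (hα : -1 < α) (hz : 0 < z)
    (P : ℕ → Polynomial ℝ)
    (hP_monic : ∀ n, (P n).Monic)
    (hP_deg : ∀ n, (P n).natDegree = n)
    (hP_orth : ∀ m n, m ≠ n →
      ∫ x in (0:ℝ)..z, (P m).eval x * (P n).eval x * x ^ α * Real.exp (-x) = 0)
    (a b : ℕ → ℝ)
    (ha0 : a 0 = 0)
    (hrec0 : Polynomial.X * P 0 = P 1 + Polynomial.C (b 0) * P 0)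
    (hrec : ∀ n, 1 ≤ n →
      Polynomial.X * P n = P (n + 1) + Polynomial.C (b n) * P n + Polynomial.C (a n) * P (n - 1)) :
    ∀ n : ℕ,
      (Polynomial.X ^ 2 - Polynomial.C z * Polynomial.X) *
          Polynomial.derivative (P (n + 1)) =
        (Polynomial.C ((n : ℝ) + 1) * (Polynomial.X - Polynomial.C z)
            + Polynomial.C ((∑ k ∈ Finset.range (n + 1), b k) - a (n + 1))) * P (n + 1)
          + (Polynomial.C (a (n + 1)) *
              (Polynomial.X + Polynomial.C (b (n + 1) - (2 * (n : ℝ) + α + z + 3)))) * P n := by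
  have hrec' : ∀ n, X * P n = P (n + 1) + C (b n) * P n + C (a n) * P (n - 1) := by
    intro n
    rcases Nat.eq_zero_or_pos n with rfl | h
    · rw [hrec0, ha0]; simp
    · exact hrec n h
  intro n
  have key := tl_alg (tlL α z hα) P α z hP_monic hP_deg
    (fun m n h => by
      have := hP_orth m n h
      change (∫ x in (0:ℝ)..z, _) = 0
      simpa only [eval_mul] using this)
    a b ha0 hrec' (tl_ibp α z hα hz) (tl_definite α z hα hz) n
  rw [key]
  have r1 := hrec' (n + 1)
  have r2 := hrec' n
  rw [Nat.add_sub_cancel] at r1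
  simp only [C_add, C_sub, C_mul] at *
  have t3 : (C (3:ℝ) : ℝ[X]) = C 2 + C 1 := by rw [← C_add]; norm_num
  have t2 : (C (2:ℝ) : ℝ[X]) = C 1 + C 1 := by rw [← C_add]; norm_num
  rw [t3, t2]
  simp only [C_1]
  linear_combination (-(C (n:ℝ) + 1)) * r1 - C (a (n + 1)) * r2
end

section
/- Assume that for each n the coefficients of P_n(·; z) are twice differentiable functions of z on (0, ∞), and let σ_n(z) be minus the coefficient of x^{n−1} in P_n(x; z). Then for every n ≥ 0, y = σ_n is a solution on (0, ∞) of the nonlinear ODE (z·y″)² + 4·(y′)²·(n − y′)·(n + α − y′) − [n·(n + α) − y + (2·y′ + z − 2n − α)·y′]² = 0 (a form of the Painlevé V equation). -/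
open MeasureTheory intervalIntegral Polynomial

namespace TL

lemma intble (α : ℝ) (hα : -1 < α) (z : ℝ) (p : ℝ[X]) :
    IntervalIntegrable (fun x : ℝ => p.eval x * x ^ α * Real.exp (-x)) volume 0 z := by
  have h1 : IntervalIntegrable (fun x : ℝ => x ^ α) volume 0 z :=
    intervalIntegral.intervalIntegrable_rpow' hα
  have h2 := (h1.continuousOn_mul (g := fun x => p.eval x) (by fun_prop)).mul_continuousOn
    (g := fun x => Real.exp (-x)) (by fun_prop)
  exact h2

noncomputable def L (α : ℝ) (hα : -1 < α) (z : ℝ) : ℝ[X] →ₗ[ℝ] ℝ where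
  toFun p := ∫ x in (0:ℝ)..z, p.eval x * x ^ α * Real.exp (-x)
  map_add' p q := by
    rw [← intervalIntegral.integral_add (intble α hα z p) (intble α hα z q)]
    congr 1; ext x; simp; ring
  map_smul' c p := by
    rw [RingHom.id_apply, smul_eq_mul, ← intervalIntegral.integral_const_mul]
    congr 1; ext x; simp; ring

lemma L_apply (α : ℝ) (hα : -1 < α) (z : ℝ) (p : ℝ[X]) :
    L α hα z p = ∫ x in (0:ℝ)..z, p.eval x * x ^ α * Real.exp (-x) := rfl

lemma L_pos (α : ℝ) (hα : -1 < α) (z : ℝ) (hz : 0 < z) (p : ℝ[X]) (hp : p ≠ 0)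
    (h : ∀ x, 0 < x → x ≤ z → 0 ≤ p.eval x) : 0 < L α hα z p := by
  rw [L_apply, intervalIntegral.integral_pos_iff_support_of_nonneg_ae' _ (intble α hα z p)]
  · refine ⟨hz, ?_⟩
    have hfin : volume ((p.roots.toFinset : Set ℝ)) = 0 :=
      (Finset.finite_toSet _).measure_zero _
    have h1 : volume (Set.Ioc 0 z \ (p.roots.toFinset : Set ℝ)) = volume (Set.Ioc 0 z) :=
      measure_sdiff_null hfin
    refine lt_of_lt_of_le ?_ (measure_mono (s := Set.Ioc 0 z \ (p.roots.toFinset : Set ℝ)) ?_)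
    · rw [h1]; simp [hz]
    · rintro x ⟨hx, hx2⟩
      refine ⟨?_, hx⟩
      have : p.eval x ≠ 0 := by
        intro h0; apply hx2; simp [hp, h0]
      have h3 := Real.rpow_pos_of_pos hx.1 α
      simp only [Function.mem_support]
      have := Real.exp_pos (-x)
      positivity
  · rw [Filter.EventuallyLE, Set.uIoc_of_le hz.le, ae_restrict_iff' measurableSet_Ioc]
    refine Filter.Eventually.of_forall fun x hx => ?_
    have := h x hx.1 hx.2
    have h3 := Real.rpow_pos_of_pos hx.1 α
    simp only [Pi.zero_apply]
    positivity

lemma L_deriv (α : ℝ) (hα : -1 < α) (z : ℝ) (hz : 0 < z) (p : ℝ[X]) :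
    HasDerivAt (fun z => L α hα z p) (p.eval z * z ^ α * Real.exp (-z)) z := by
  simp only [L_apply]
  have hc : ContinuousOn (fun x : ℝ => p.eval x * x ^ α * Real.exp (-x)) (Set.Ioi 0) := by
    refine ContinuousOn.mul (ContinuousOn.mul (by fun_prop) ?_) (by fun_prop)
    exact fun x hx => (Real.continuousAt_rpow_const _ _ (Or.inl (ne_of_gt hx))).continuousWithinAt
  exact intervalIntegral.integral_hasDerivAt_right (intble α hα z p)
    (hc.stronglyMeasurableAtFilter isOpen_Ioi z hz) (hc.continuousAt (Ioi_mem_nhds hz))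

lemma pearson (α : ℝ) (hα : -1 < α) (z : ℝ) (hz : 0 < z) (f : ℝ[X]) :
    L α hα z ((C (1 + α) - X) * f + X * derivative f) =
      z * (z ^ α * Real.exp (-z)) * f.eval z := by
  rw [L_apply]
  have := intervalIntegral.integral_eq_sub_of_hasDerivAt_of_le hz.le
    (f := fun x => x ^ (α + 1) * Real.exp (-x) * f.eval x)
    (f' := fun x => ((C (1 + α) - X) * f + X * derivative f).eval x * x ^ α * Real.exp (-x))
    ?_ ?_ (intble α hα z _)
  · rw [this, Real.zero_rpow (by linarith), Real.rpow_add_one hz.ne']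
    ring
  · refine ContinuousOn.mul (ContinuousOn.mul ?_ (by fun_prop)) (by fun_prop)
    exact (Real.continuous_rpow_const (by linarith)).continuousOn
  · intro x hx
    have h1 := Real.hasDerivAt_rpow_const (x := x) (p := α + 1) (Or.inl hx.1.ne')
    have h2 : HasDerivAt (fun x : ℝ => Real.exp (-x)) (Real.exp (-x) * -1) x :=
      (hasDerivAt_neg x).exp
    refine ((h1.mul h2).mul (f.hasDerivAt x)).congr_deriv ?_
    simp [Real.rpow_add_one hx.1.ne']
    ring

section abs
variable (L : ℝ[X] →ₗ[ℝ] ℝ) (P : ℕ → ℝ[X])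

lemma L_C (c : ℝ) (p : ℝ[X]) : L (C c * p) = c * L p := by
  rw [← smul_eq_C_mul, map_smul, smul_eq_mul]

lemma cdeg (hm : ∀ n, (P n).Monic) (hd : ∀ n, (P n).natDegree = n) (n k : ℕ) (h : n < k) :
    (P n).coeff k = 0 := coeff_eq_zero_of_natDegree_lt (by rw [hd]; exact h)

lemma ctop (hm : ∀ n, (P n).Monic) (hd : ∀ n, (P n).natDegree = n) (n : ℕ) :
    (P n).coeff n = 1 := by have := (hm n).coeff_natDegree; rwa [hd] at this

lemma orth_low (hm : ∀ n, (P n).Monic) (hd : ∀ n, (P n).natDegree = n)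
    (ho : ∀ m n, m ≠ n → L (P m * P n) = 0) (n : ℕ) :
    ∀ k ≤ n, ∀ q : ℝ[X], (∀ j ≥ k, q.coeff j = 0) → L (P n * q) = 0 := by
  intro k
  induction k with
  | zero =>
    intro _ q hq
    have : q = 0 := by ext j; simpa using hq j (Nat.zero_le _)
    simp [this]
  | succ k ih =>
    intro hk q hq
    have h1 := ih (by omega) (q - C (q.coeff k) * P k) (by
      intro j hj
      rcases eq_or_lt_of_le hj with rfl | hj
      · simp [ctop P hm hd]
      · simp [cdeg P hm hd k j hj, hq j hj])
    rw [mul_sub, map_sub, mul_left_comm, L_C, ho n k (by omega)] at h1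
    simpa using h1

lemma orth_eq (hm : ∀ n, (P n).Monic) (hd : ∀ n, (P n).natDegree = n)
    (ho : ∀ m n, m ≠ n → L (P m * P n) = 0) (n : ℕ) (q : ℝ[X])
    (hq : ∀ j > n, q.coeff j = 0) : L (P n * q) = q.coeff n * L (P n * P n) := by
  have h1 := orth_low L P hm hd ho n n le_rfl (q - C (q.coeff n) * P n) (by
      intro j hj
      rcases eq_or_lt_of_le hj with rfl | hj
      · simp [ctop P hm hd]
      · simp [cdeg P hm hd n j hj, hq j hj])
  rw [mul_sub, map_sub, mul_left_comm, L_C] at h1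
  linarith

lemma coeff_Xd (p : ℝ[X]) (k : ℕ) : (X * derivative p).coeff k = k * p.coeff k := by
  cases k with
  | zero => simp
  | succ k => rw [coeff_X_mul, coeff_derivative]; push_cast; ring

/-- X P_n against P_n -/
lemma LXPP (hm : ∀ n, (P n).Monic) (hd : ∀ n, (P n).natDegree = n)
    (ho : ∀ m n, m ≠ n → L (P m * P n) = 0) (s : ℕ → ℝ) (hs0 : s 0 = 0)
    (hs : ∀ n, s (n + 1) = -(P (n + 1)).coeff n) (n : ℕ) :
    L (P n * (X * P n)) = (s (n + 1) - s n) * L (P n * P n) := by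
  have h := orth_eq L P hm hd ho n (X * P n - P (n + 1)) (by
    intro j hj
    obtain ⟨i, rfl⟩ : ∃ i, j = i + 1 := ⟨j - 1, by omega⟩
    rw [coeff_sub, coeff_X_mul]
    rcases eq_or_lt_of_le (Nat.lt_succ_iff.mp hj) with rfl | hi
    · simp [ctop P hm hd]
    · rw [cdeg P hm hd _ _ hi, cdeg P hm hd _ _ (by omega)]; simp)
  rw [mul_sub, map_sub, ho n (n + 1) (by omega), sub_zero] at h
  rw [h]; congr 1
  cases n with
  | zero => simp [hs0, hs]
  | succ n => rw [coeff_sub, coeff_X_mul, hs, hs]; ring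

lemma LXPP1 (hm : ∀ n, (P n).Monic) (hd : ∀ n, (P n).natDegree = n)
    (ho : ∀ m n, m ≠ n → L (P m * P n) = 0) (n : ℕ) :
    L (P (n + 1) * (X * P n)) = L (P (n + 1) * P (n + 1)) := by
  rw [orth_eq L P hm hd ho (n + 1) (X * P n), coeff_X_mul, ctop P hm hd, one_mul]
  intro j hj
  obtain ⟨i, rfl⟩ : ∃ i, j = i + 1 := ⟨j - 1, by omega⟩
  rw [coeff_X_mul]
  exact cdeg P hm hd _ _ (by omega)

lemma LdPP (hm : ∀ n, (P n).Monic) (hd : ∀ n, (P n).natDegree = n)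
    (ho : ∀ m n, m ≠ n → L (P m * P n) = 0) (n : ℕ) :
    L (P n * (X * derivative (P n))) = n * L (P n * P n) := by
  rw [orth_eq L P hm hd ho n, coeff_Xd, ctop P hm hd, mul_one]
  intro j hj
  rw [coeff_Xd, cdeg P hm hd _ _ hj, mul_zero]

lemma LdPP1 (hm : ∀ n, (P n).Monic) (hd : ∀ n, (P n).natDegree = n)
    (ho : ∀ m n, m ≠ n → L (P m * P n) = 0) (n : ℕ) :
    L (P (n + 1) * (X * derivative (P n))) = 0 := by
  rw [orth_eq L P hm hd ho (n + 1), coeff_Xd, cdeg P hm hd _ _ (by omega)]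
  · simp
  intro j hj
  rw [coeff_Xd, cdeg P hm hd _ _ (by omega), mul_zero]

lemma LdP1P (hm : ∀ n, (P n).Monic) (hd : ∀ n, (P n).natDegree = n)
    (ho : ∀ m n, m ≠ n → L (P m * P n) = 0) (n : ℕ) :
    L (P n * (X * derivative (P (n + 1)))) = -(P (n + 1)).coeff n * L (P n * P n) := by
  have h := orth_eq L P hm hd ho n (X * derivative (P (n + 1)) - C ((n + 1 : ℕ) : ℝ) * P (n + 1)) (by
    intro j hj
    rw [coeff_sub, coeff_Xd, coeff_C_mul]
    rcases eq_or_lt_of_le (Nat.succ_le_of_lt hj) with rfl | hi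
    · simp
    · rw [cdeg P hm hd _ _ hi]; simp)
  rw [mul_sub, map_sub, mul_left_comm _ (C _), L_C, ho n (n + 1) (by omega), mul_zero, sub_zero] at h
  rw [h, coeff_sub, coeff_Xd, coeff_C_mul]; push_cast; ring

lemma ttrr0 (hm : ∀ n, (P n).Monic) (hd : ∀ n, (P n).natDegree = n) (z : ℝ) :
    (P 1).eval z = z + (P 1).coeff 0 ∧ (P 0).eval z = 1 := by
  constructor
  · rw [eval_eq_sum_range, hd]
    simp [Finset.sum_range_succ, ctop P hm hd]; ring
  · rw [eval_eq_sum_range, hd]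
    simp [ctop P hm hd]

lemma ttrr (hm : ∀ n, (P n).Monic) (hd : ∀ n, (P n).natDegree = n)
    (ho : ∀ m n, m ≠ n → L (P m * P n) = 0) (hpos : ∀ p, p ≠ 0 → 0 < L (p * p))
    (s : ℕ → ℝ) (hs0 : s 0 = 0)
    (hs : ∀ n, s (n + 1) = -(P (n + 1)).coeff n) (n : ℕ) (a : ℝ)
    (ha : a * L (P n * P n) = L (P (n + 1) * P (n + 1))) :
    X * P (n + 1) = P (n + 2) + C (s (n + 2) - s (n + 1)) * P (n + 1) + C a * P n := by
  obtain ⟨T, hT⟩ : ∃ T, T = X * P (n + 1) - P (n + 2) - C (s (n + 2) - s (n + 1)) * P (n + 1)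
    - C a * P n := ⟨_, rfl⟩
  have hc : ∀ j > n, T.coeff j = 0 := by
    intro j hj
    obtain ⟨i, rfl⟩ : ∃ i, j = i + 1 := ⟨j - 1, by omega⟩
    rw [hT]
    simp only [coeff_sub, coeff_X_mul, coeff_C_mul]
    rw [cdeg P hm hd n _ hj]
    rcases eq_or_lt_of_le (Nat.lt_succ_iff.mp hj) with rfl | hi
    · rw [ctop P hm hd, hs, hs]; ring
    rcases eq_or_lt_of_le (Nat.succ_le_of_lt hi) with rfl | hi
    · simp [ctop P hm hd, cdeg P hm hd (n + 1) (n + 2) (by omega)]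
    · simp [cdeg P hm hd (n + 1) i (by omega), cdeg P hm hd (n + 1) (i + 1) (by omega),
        cdeg P hm hd (n + 2) (i + 1) (by omega)]
  have h0 : L (T * T) = 0 := by
    have e : T * T = P (n + 1) * (X * T) - P (n + 2) * T
      - C (s (n + 2) - s (n + 1)) * (P (n + 1) * T) - C a * (P n * T) := by
      nth_rw 1 [hT]; ring
    rw [e, map_sub, map_sub, map_sub, L_C, L_C,
      orth_low L P hm hd ho (n + 2) (n + 1) (by omega) T (fun j hj => hc j hj),
      orth_low L P hm hd ho (n + 1) (n + 1) (by omega) T (fun j hj => hc j hj),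
      orth_eq L P hm hd ho n T hc, orth_eq L P hm hd ho (n + 1) (X * T), coeff_X_mul, ← ha]
    · ring
    · intro j hj
      obtain ⟨i, rfl⟩ : ∃ i, j = i + 1 := ⟨j - 1, by omega⟩
      rw [coeff_X_mul]; exact hc i (by omega)
  have hT0 : T = 0 := by
    by_contra h
    exact (hpos T h).ne' h0
  rw [hT0] at hT
  linear_combination -hT

end abs

/-- the purely algebraic part -/
lemma alg (z α : ℝ) (R r a b s : ℕ → ℝ) (hR : ∀ n, R n ≠ 0) (r0 : r 0 = 0) (a0 : a 0 = 0)
    (s0 : s 0 = 0) (hb : ∀ n, s (n + 1) = s n + b n)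
    (h1 : ∀ n, z * R n = 2 * n + 1 + α - b n)
    (h2 : ∀ n, r (n + 1) + r n = (z - b n) * R n)
    (h3 : ∀ n, a n = s n - z * r n)
    (h4 : ∀ n, r (n + 1) ^ 2 = a (n + 1) * R (n + 1) * R n) (n : ℕ) :
    a (n + 1) * (R (n + 1) + R n) =
      ((n + 1 : ℕ) : ℝ) * ((n + 1 : ℕ) + α) - (2 * (n + 1 : ℕ) + α) * r (n + 1) - a (n + 1) := by
  have step : ∀ n : ℕ, a n * R n ^ 2 + r n ^ 2 = R n * (n * (n + α) - (2 * n + α) * r n - a n) →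
      a (n + 1) * (R (n + 1) + R n) =
      ((n + 1 : ℕ) : ℝ) * ((n + 1 : ℕ) + α) - (2 * (n + 1 : ℕ) + α) * r (n + 1) - a (n + 1) := by
    intro n hG
    apply mul_left_cancel₀ (hR n)
    have e1 := h1 n
    have e2 := h2 n
    have e3 := h3 n
    have e3' := h3 (n + 1)
    rw [hb n] at e3'
    have e4 := h4 n
    push_cast
    have hda : a (n + 1) - a n = b n - z * (r (n + 1) - r n) := by rw [e3, e3']; ring
    have hal : α = z * R n + b n - 2 * n - 1 := by linarith
    have ha1 : a (n + 1) = a n + b n - z * (r (n + 1) - r n) := by linarith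
    have hr : r (n + 1) = (z - b n) * R n - r n := by linarith
    have key : r (n + 1) ^ 2 + a (n + 1) * R n ^ 2 =
        R n * ((n + 1 : ℝ) * (n + 1 + α) - (2 * (n + 1) + α) * r (n + 1) - a (n + 1)) := by
      rw [ha1, hr]
      rw [hal] at hG ⊢
      linear_combination hG
    linear_combination key - e4
  have G : ∀ n : ℕ, a n * R n ^ 2 + r n ^ 2 = R n * (n * (n + α) - (2 * n + α) * r n - a n) := by
    intro n
    induction n with
    | zero => simp [r0, a0]
    | succ n ih =>
      have := step n ih
      rw [h4 n, ← this]; ring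
  exact step n (G n)

/-- differentiate `⟨P(z), q⟩_z` -/
lemma deriv_pair (α : ℝ) (hα : -1 < α) (N : ℕ) (Q : ℝ → ℝ[X])
    (hd : ∀ z, 0 < z → (Q z).natDegree = N)
    (hdiff : ∀ k, ContDiffOn ℝ 2 (fun z => (Q z).coeff k) (Set.Ioi 0))
    (z : ℝ) (hz : 0 < z) : ∃ D : ℝ[X],
      (∀ k, D.coeff k = deriv (fun z => (Q z).coeff k) z) ∧
      ∀ q : ℝ[X], HasDerivAt (fun t => L α hα t (Q t * q))
        (L α hα z (D * q) + z ^ α * Real.exp (-z) * ((Q z).eval z * q.eval z)) z := by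
  have hnz : ∀ᶠ t in nhds z, 0 < t := Ioi_mem_nhds hz
  have hc : ∀ k, HasDerivAt (fun z => (Q z).coeff k) (deriv (fun z => (Q z).coeff k) z) z :=
    fun k => (((hdiff k).differentiableOn (by norm_num)).differentiableAt
      (Ioi_mem_nhds hz)).hasDerivAt
  have hrep : ∀ t, 0 < t → ∀ q, L α hα t (Q t * q) =
      ∑ j ∈ Finset.range (N + 1), (Q t).coeff j * L α hα t (X ^ j * q) := by
    intro t ht q
    conv_lhs => rw [(Q t).as_sum_range_C_mul_X_pow, hd t ht, Finset.sum_mul, map_sum]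
    refine Finset.sum_congr rfl fun j _ => ?_
    rw [mul_assoc, L_C]
  refine ⟨∑ j ∈ Finset.range (N + 1), C (deriv (fun z => (Q z).coeff j) z) * X ^ j, ?_, ?_⟩
  · intro k
    simp only [finsetSum_coeff, coeff_C_mul, coeff_X_pow, mul_ite, mul_one, mul_zero]
    rw [Finset.sum_ite_eq]
    split_ifs with h
    · rfl
    · have : (fun z => (Q z).coeff k) =ᶠ[nhds z] fun _ => 0 := by
        filter_upwards [hnz] with t ht
        apply coeff_eq_zero_of_natDegree_lt
        rw [hd t ht]; simpa using h
      rw [this.deriv_eq]; simp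
  · intro q
    have hs : HasDerivAt (fun t => ∑ j ∈ Finset.range (N + 1),
        (Q t).coeff j * L α hα t (X ^ j * q))
        (∑ j ∈ Finset.range (N + 1), (deriv (fun z => (Q z).coeff j) z * L α hα z (X ^ j * q)
          + (Q z).coeff j * ((X ^ j * q).eval z * z ^ α * Real.exp (-z)))) z :=
      HasDerivAt.fun_sum fun j _ => (hc j).mul (L_deriv α hα z hz (X ^ j * q))
    have he : (fun t => L α hα t (Q t * q)) =ᶠ[nhds z] fun t => ∑ j ∈ Finset.range (N + 1),
        (Q t).coeff j * L α hα t (X ^ j * q) := by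
      filter_upwards [hnz] with t ht using hrep t ht q
    refine (hs.congr_of_eventuallyEq he).congr_deriv ?_
    rw [Finset.sum_add_distrib, Finset.sum_mul, map_sum]
    congr 1
    · refine Finset.sum_congr rfl fun j _ => ?_
      rw [mul_assoc, L_C]
    · rw [eval_eq_sum_range, hd z hz, Finset.sum_mul, Finset.mul_sum]
      refine Finset.sum_congr rfl fun j _ => ?_
      simp; ring

end TL

open TL in
/-- The subleading coefficient `σ_n(z)` of the monic truncated Laguerre polynomial
`P_n(x;z)` solves a nonlinear ODE (a form of the Painlevé V equation). -/
theorem truncated_laguerre_painleveV (α : ℝ) (hα : -1 < α)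
    (P : ℕ → ℝ → Polynomial ℝ)
    (hP_monic : ∀ n z, 0 < z → (P n z).Monic)
    (hP_deg : ∀ n z, 0 < z → (P n z).natDegree = n)
    (hP_orth : ∀ m n z, 0 < z → m ≠ n →
      ∫ x in (0:ℝ)..z, (P m z).eval x * (P n z).eval x * x ^ α * Real.exp (-x) = 0)
    (hdiff : ∀ n k, ContDiffOn ℝ 2 (fun z => (P n z).coeff k) (Set.Ioi 0))
    (σ : ℕ → ℝ → ℝ)
    (hσ0 : ∀ z, σ 0 z = 0)
    (hσ : ∀ n z, σ (n + 1) z = -((P (n + 1) z).coeff n)) :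
    ∀ n : ℕ, ∀ z : ℝ, 0 < z →
      (z * deriv (deriv (σ n)) z) ^ 2
        + 4 * (deriv (σ n) z) ^ 2 * ((n : ℝ) - deriv (σ n) z) * ((n : ℝ) + α - deriv (σ n) z)
        - ((n : ℝ) * ((n : ℝ) + α) - σ n z
            + (2 * deriv (σ n) z + z - 2 * (n : ℝ) - α) * deriv (σ n) z) ^ 2 = 0 := by
  -- basic facts
  have ho : ∀ z, 0 < z → ∀ m n, m ≠ n → L α hα z (P m z * P n z) = 0 := by
    intro z hz m n hmn
    have := hP_orth m n z hz hmn
    rw [L_apply]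
    simpa only [eval_mul] using this
  have hpos : ∀ z, 0 < z → ∀ p : ℝ[X], p ≠ 0 → 0 < L α hα z (p * p) := by
    intro z hz p hp
    refine L_pos α hα z hz _ (mul_ne_zero hp hp) fun x _ _ => ?_
    rw [eval_mul]; exact mul_self_nonneg _
  obtain ⟨h, hh⟩ : ∃ h : ℕ → ℝ → ℝ, ∀ n z, h n z = L α hα z (P n z * P n z) :=
    ⟨_, fun _ _ => rfl⟩
  obtain ⟨w, hw⟩ : ∃ w : ℝ → ℝ, ∀ z, w z = z ^ α * Real.exp (-z) := ⟨_, fun _ => rfl⟩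
  obtain ⟨p, hp⟩ : ∃ p : ℕ → ℝ → ℝ, ∀ n z, p n z = (P n z).eval z := ⟨_, fun _ _ => rfl⟩
  have hwpos : ∀ z, 0 < z → 0 < w z := fun z hz => by
    rw [hw]; have := Real.rpow_pos_of_pos hz α; positivity
  have hhpos : ∀ n z, 0 < z → 0 < h n z := fun n z hz => by
    rw [hh]; exact hpos z hz _ (hP_monic n z hz).ne_zero
  have hp0 : ∀ n z, 0 < z → p n z ≠ 0 := by
    intro n z hz h0
    rw [hp] at h0
    obtain ⟨q, hq⟩ := dvd_iff_isRoot.mpr h0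
    have hPne := (hP_monic n z hz).ne_zero
    have hq0 : q ≠ 0 := by rintro rfl; simp at hq; exact hPne hq
    have hdeg : n = 1 + q.natDegree := by
      rw [← hP_deg n z hz, hq, natDegree_mul (X_sub_C_ne_zero z) hq0, natDegree_X_sub_C]
    have h1 := orth_low (L α hα z) (fun n => P n z) (fun n => hP_monic n z hz)
      (fun n => hP_deg n z hz) (ho z hz) n n le_rfl q
      (fun j hj => coeff_eq_zero_of_natDegree_lt (by omega))
    have h2 : 0 < L α hα z (-(P n z * q)) := by
      refine L_pos α hα z hz _ (neg_ne_zero.mpr (mul_ne_zero hPne hq0)) fun x _ hx => ?_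
      rw [hq]; simp only [eval_neg, eval_mul, eval_sub, eval_X, eval_C]
      nlinarith [mul_self_nonneg (q.eval x), mul_nonneg (sub_nonneg.mpr hx) (mul_self_nonneg (q.eval x))]
    rw [map_neg] at h2
    try simp only at h1
    linarith
  -- Pearson relations
  have hP1 : ∀ n z, 0 < z → z * w z * p n z ^ 2 =
      (2 * n + 1 + α - (σ (n + 1) z - σ n z)) * h n z := by
    intro n z hz
    have h1 := pearson α hα z hz (P n z * P n z)
    have e : (C (1 + α) - X) * (P n z * P n z) + X * derivative (P n z * P n z)
      = C (1 + α) * (P n z * P n z) - P n z * (X * P n z)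
        + P n z * (X * derivative (P n z)) + P n z * (X * derivative (P n z)) := by
      rw [derivative_mul]; ring
    have e1 := LXPP (L α hα z) (fun n => P n z) (fun n => hP_monic n z hz)
      (fun n => hP_deg n z hz) (ho z hz) (fun n => σ n z) (hσ0 z) (fun n => hσ n z) n
    have e2 := LdPP (L α hα z) (fun n => P n z) (fun n => hP_monic n z hz)
      (fun n => hP_deg n z hz) (ho z hz) n
    try simp only at e1 e2
    rw [e, map_add, map_add, map_sub, L_C, e1, e2, ← hh, ← hw, eval_mul, ← hp] at h1
    linear_combination -h1
  have hP2 : ∀ n z, 0 < z → z * w z * (p (n + 1) z * p n z) =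
      σ (n + 1) z * h n z - h (n + 1) z := by
    intro n z hz
    have h1 := pearson α hα z hz (P (n + 1) z * P n z)
    have e : (C (1 + α) - X) * (P (n + 1) z * P n z) + X * derivative (P (n + 1) z * P n z)
      = C (1 + α) * (P (n + 1) z * P n z) - P (n + 1) z * (X * P n z)
        + P n z * (X * derivative (P (n + 1) z)) + P (n + 1) z * (X * derivative (P n z)) := by
      rw [derivative_mul]; ring
    have e1 := LXPP1 (L α hα z) (fun n => P n z) (fun n => hP_monic n z hz)
      (fun n => hP_deg n z hz) (ho z hz) n
    have e2 := LdPP1 (L α hα z) (fun n => P n z) (fun n => hP_monic n z hz)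
      (fun n => hP_deg n z hz) (ho z hz) n
    have e3 := LdP1P (L α hα z) (fun n => P n z) (fun n => hP_monic n z hz)
      (fun n => hP_deg n z hz) (ho z hz) n
    try simp only at e1 e2 e3
    rw [e, map_add, map_add, map_sub, L_C, e1, e2, e3, ← hσ, ← hh, ← hh, ← hw, eval_mul, ← hp,
      ← hp, ho z hz _ _ (by omega)] at h1
    linear_combination -h1
  -- recurrence
  have hT0 : ∀ z, 0 < z → p 1 z = (z - σ 1 z) * p 0 z := by
    intro z hz
    have := ttrr0 (fun n => P n z) (fun n => hP_monic n z hz) (fun n => hP_deg n z hz) z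
    try simp only at this
    rw [hp, hp, this.1, this.2, hσ]; ring
  have hT : ∀ n z, 0 < z → z * p (n + 1) z = p (n + 2) z + (σ (n + 2) z - σ (n + 1) z) * p (n + 1) z
      + h (n + 1) z / h n z * p n z := by
    intro n z hz
    have := ttrr (L α hα z) (fun n => P n z) (fun n => hP_monic n z hz)
      (fun n => hP_deg n z hz) (ho z hz) (hpos z hz) (fun n => σ n z) (hσ0 z) (fun n => hσ n z) n
      (h (n + 1) z / h n z) (by
        simp only [← hh]; exact div_mul_cancel₀ _ (hhpos n z hz).ne')
    have := congrArg (eval z) this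
    simpa [← hp] using this
  -- derivatives
  have hDh : ∀ n z, 0 < z → HasDerivAt (h n) (w z * p n z ^ 2) z := by
    intro n z hz
    obtain ⟨D, hD, hDq⟩ := deriv_pair α hα n (P n) (hP_deg n) (hdiff n) z hz
    have hD0 : ∀ j ≥ n, D.coeff j = 0 := by
      intro j hj
      rw [hD]
      have : (fun z => (P n z).coeff j) =ᶠ[nhds z] fun _ => if j = n then 1 else 0 := by
        filter_upwards [Ioi_mem_nhds hz] with t ht
        split_ifs with hjn
        · rw [hjn]; exact ctop (fun n => P n t) (fun n => hP_monic n t ht) (fun n => hP_deg n t ht) n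
        · exact cdeg (fun n => P n t) (fun n => hP_monic n t ht) (fun n => hP_deg n t ht) n j
            (by omega)
      rw [this.deriv_eq]; simp
    have h1 := hDq (P n z)
    have h2 := orth_low (L α hα z) (fun n => P n z) (fun n => hP_monic n z hz)
      (fun n => hP_deg n z hz) (ho z hz) n n le_rfl D hD0
    try simp only at h2
    rw [mul_comm D, h2, ← hw, ← hp] at h1
    refine (h1.congr_of_eventuallyEq ?_).congr_deriv (by ring)
    filter_upwards [Ioi_mem_nhds hz] with t ht
    have h3 := orth_eq (L α hα t) (fun n => P n t) (fun n => hP_monic n t ht)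
      (fun n => hP_deg n t ht) (ho t ht) n (P n z) (fun j hj =>
        cdeg (fun n => P n z) (fun n => hP_monic n z hz) (fun n => hP_deg n z hz) n j hj)
    have h4 := ctop (fun n => P n z) (fun n => hP_monic n z hz) (fun n => hP_deg n z hz) n
    try simp only at h3 h4
    rw [h3, h4, one_mul, hh]
  have hDσ : ∀ n z, 0 < z → HasDerivAt (σ (n + 1)) (w z * p (n + 1) z * p n z / h n z) z := by
    intro n z hz
    obtain ⟨D, hD, hDq⟩ := deriv_pair α hα (n + 1) (P (n + 1)) (hP_deg (n + 1)) (hdiff (n + 1)) z hz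
    have hD0 : ∀ j > n, D.coeff j = 0 := by
      intro j hj
      rw [hD]
      have : (fun z => (P (n + 1) z).coeff j) =ᶠ[nhds z] fun _ => if j = n + 1 then 1 else 0 := by
        filter_upwards [Ioi_mem_nhds hz] with t ht
        split_ifs with hjn
        · rw [hjn]
          exact ctop (fun n => P n t) (fun n => hP_monic n t ht) (fun n => hP_deg n t ht) (n + 1)
        · exact cdeg (fun n => P n t) (fun n => hP_monic n t ht) (fun n => hP_deg n t ht) (n + 1) j
            (by omega)
      rw [this.deriv_eq]; simp
    have h1 := hDq (P n z)
    have h2 := orth_eq (L α hα z) (fun n => P n z) (fun n => hP_monic n z hz)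
      (fun n => hP_deg n z hz) (ho z hz) n D hD0
    try simp only at h2
    rw [mul_comm D, h2, ← hw, ← hp, ← hp, ← hh, hD] at h1
    have h0 : (fun t => L α hα t (P (n + 1) t * P n z)) =ᶠ[nhds z] fun _ => 0 := by
      filter_upwards [Ioi_mem_nhds hz] with t ht
      exact orth_low (L α hα t) (fun n => P n t) (fun n => hP_monic n t ht)
        (fun n => hP_deg n t ht) (ho t ht) (n + 1) (n + 1) le_rfl (P n z) (fun j hj =>
        cdeg (fun n => P n z) (fun n => hP_monic n z hz) (fun n => hP_deg n z hz) n j hj)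
    have h3 := h1.deriv
    rw [h0.deriv_eq, deriv_const] at h3
    have hσe : σ (n + 1) = fun t => -((P (n + 1) t).coeff n) := funext (hσ n)
    have h5 := ((((hdiff (n + 1) n).differentiableOn (by norm_num)).differentiableAt
      (Ioi_mem_nhds hz)).hasDerivAt).neg
    rw [hσe]
    refine h5.congr_deriv ?_
    have := (hhpos n z hz).ne'
    field_simp
    linarith
  intro n z hz
  cases n with
  | zero =>
    have : σ 0 = fun _ => 0 := funext hσ0
    simp [this]
  | succ n =>
    have ha : ∀ t, 0 < t → h (n + 1) t / h n t = σ (n + 1) t - t * deriv (σ (n + 1)) t := by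
      intro t ht
      rw [(hDσ n t ht).deriv]
      have := (hhpos n t ht).ne'
      have := hP2 n t ht
      field_simp
      linarith
    have hE := alg z α (fun k => w z * p k z ^ 2 / h k z)
      (fun k => Nat.casesOn k 0 fun k => w z * p (k + 1) z * p k z / h k z)
      (fun k => Nat.casesOn k 0 fun k => h (k + 1) z / h k z)
      (fun k => σ (k + 1) z - σ k z) (fun k => σ k z)
      (fun k => by
        have := hhpos k z hz
        have := hwpos z hz
        have := hp0 k z hz
        positivity) rfl rfl (hσ0 z) (fun k => by ring)
      (fun k => by
        have := (hhpos k z hz).ne'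
        have := hP1 k z hz
        field_simp
        linarith)
      (fun k => by
        have h0 := (hhpos k z hz).ne'
        cases k with
        | zero =>
          change w z * p 1 z * p 0 z / h 0 z + 0 =
            (z - (σ 1 z - σ 0 z)) * (w z * p 0 z ^ 2 / h 0 z)
          rw [hT0 z hz, hσ0]
          field_simp
          ring
        | succ k =>
          have h1 := (hhpos k z hz).ne'
          have h2 := hT k z hz
          have h3 : p (k + 2) z = z * p (k + 1) z - (σ (k + 2) z - σ (k + 1) z) * p (k + 1) z
            - h (k + 1) z / h k z * p k z := by linarith
          simp only
          rw [show k + 1 + 1 = k + 2 from rfl, h3]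
          field_simp
          ring)
      (fun k => by
        cases k with
        | zero => simp [hσ0]
        | succ k =>
          have := (hhpos k z hz).ne'
          have := hP2 k z hz
          simp only
          field_simp
          linarith)
      (fun k => by
        have h0 := (hhpos k z hz).ne'
        have h1 := (hhpos (k + 1) z hz).ne'
        simp only
        field_simp) n
    simp only at hE
    rw [← (hDσ n z hz).deriv] at hE
    -- second derivative
    have hn0 := (hhpos n z hz).ne'
    have hn1 := (hhpos (n + 1) z hz).ne'
    have hw0 := (hwpos z hz).ne'
    have hy := hDσ n z hz
    have hda := (hDh (n + 1) z hz).div (hDh n z hz) hn0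
    have hev : deriv (σ (n + 1)) =ᶠ[nhds z] fun t => (σ (n + 1) t - h (n + 1) t / h n t) / t := by
      filter_upwards [Ioi_mem_nhds hz] with t ht
      have ht' : t ≠ 0 := ne_of_gt ht
      rw [ha t ht]; field_simp; ring
    have hdd := ((hy.sub hda).div (hasDerivAt_id z) hz.ne').congr_of_eventuallyEq hev
    have hyy : z * deriv (deriv (σ (n + 1))) z =
        -(h (n + 1) z / h n z) * (w z * p (n + 1) z ^ 2 / h (n + 1) z - w z * p n z ^ 2 / h n z) := by
      rw [hdd.deriv]
      have := hP2 n z hz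
      simp only [Pi.sub_apply, Pi.div_apply, id]
      field_simp
      linear_combination h n z * this
    have hr2 : deriv (σ (n + 1)) z ^ 2 = h (n + 1) z / h n z *
        (w z * p (n + 1) z ^ 2 / h (n + 1) z) * (w z * p n z ^ 2 / h n z) := by
      rw [hy.deriv]; field_simp
    have haz := ha z hz
    rw [hyy]
    generalize w z * p (n + 1) z ^ 2 / h (n + 1) z = R1 at *
    generalize w z * p n z ^ 2 / h n z = R0 at *
    generalize h (n + 1) z / h n z = a at *
    generalize deriv (σ (n + 1)) z = r at *
    generalize ((n + 1 : ℕ) : ℝ) = m at *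
    have hs : σ (n + 1) z = a + z * r := by linarith
    rw [hs]
    have hE2 : (a * (R1 + R0)) ^ 2 = (m * (m + α) - (2 * m + α) * r - a) ^ 2 := by rw [hE]
    linear_combination hE2 + 4 * a * hr2
end
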